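/- Suppose f(x) > 0 almost surely and there exist p, q > 2 with (p−2)(q−2) > 4 such that E[|f(x)/μ(θ)|^p] < ∞ and E[(1 + |log(f(x)/μ(θ))|^q) · g(θ)^q] < ∞, where (θ, x) ∼ ν ⊗ κ. Then E[Δψ_{θ,ℓ}² · g(θ)²] = O(2^{−rℓ}) as ℓ → ∞, with r = min(p(q−2)/(2q), 2) ∈ (1, 2]. -/

import Mathlib

open MeasureTheory ProbabilityTheory
open scoped ProbabilityTheory

/-!
The antithetic correction is the gap in Jensen's inequality for `log` at the two half-sample means
of `f`. The gap does not change when `f` is divided by `μ(θ)`, so both means may be taken close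
to `1`. There the gap is quadratic in their deviation `W` from `1`, and everywhere it is at most
`4 (1 + gap) W ^ τ` for `0 ≤ τ ≤ 2`. With `τ = s (q - 2) / (2 q)` the square of the gap is therefore
bounded by `(1 + |log| ^ q) ^ (2 / q) * (W ^ s) ^ ((q - 2) / q)` up to a constant, and Hölder's
inequality with the weights `2 / q` and `(q - 2) / q`, given `θ` and then over `θ`, separates the
two factors. Convexity bounds the `q`-th moment of the logarithm of a sample mean by single-sample
moments uniformly in the sample size `M`, and a Marcinkiewicz–Zygmund inequality gives
`E[W ^ s] = O(M ^ (-s / 2))`. The rate `s (q - 2) / (2 q)` is largest, and equal to `r`, at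
`s = min p (4 q / (q - 2))`, where `4 q / (q - 2)` comes from `τ ≤ 2`.
-/

section MomentInequality

/-- The constant in the second-order Taylor-type bound `abs_add_rpow_le` for `|x + y| ^ s`. -/
noncomputable def rpowTaylorConst (s : ℝ) : ℝ := s ^ 2 + (s + 1) ^ s

/-- The constant `K` of the Marcinkiewicz–Zygmund type inequality
`E|∑ᵢ Xᵢ| ^ s ≤ (K * n) ^ (s / 2) * max E|Xᵢ| ^ s` for `n` independent centred variables. -/
noncomputable def momentConst (s : ℝ) : ℝ := 2 * rpowTaylorConst s + 1

variable {s : ℝ}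

lemma rpowTaylorConst_pos (hs : 0 < s) : 0 < rpowTaylorConst s := by
  unfold rpowTaylorConst; positivity

lemma momentConst_pos (hs : 0 < s) : 0 < momentConst s := by
  have := rpowTaylorConst_pos hs
  unfold momentConst; positivity

lemma abs_one_add_rpow_le (hs : 1 ≤ s) (t : ℝ) :
    |1 + t| ^ s ≤ 1 + s * t + rpowTaylorConst s * (t ^ 2 + |t| ^ s) := by
  have hs0 : 0 < s := by linarith
  have hsq : 0 ≤ s ^ 2 * |t| ^ s := by positivity
  have hpow : 0 ≤ (s + 1) ^ s * t ^ 2 := by positivity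
  unfold rpowTaylorConst
  rcases le_or_gt |s * t| 1 with hst | hst
  · have ht : -1 ≤ t := by
      rw [abs_mul, abs_of_pos hs0] at hst
      nlinarith [neg_abs_le t, abs_nonneg t]
    have hpow' : 0 ≤ (s + 1) ^ s * |t| ^ s := by positivity
    calc |1 + t| ^ s ≤ Real.exp t ^ s := by
          rw [abs_of_nonneg (by linarith), add_comm]
          exact Real.rpow_le_rpow (by linarith) (Real.add_one_le_exp t) hs0.le
      _ = Real.exp (s * t) := by rw [← Real.exp_mul, mul_comm]
      _ ≤ 1 + s * t + (s * t) ^ 2 := by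
          linarith [(abs_le.1 (Real.abs_exp_sub_one_sub_id_le hst)).2]
      _ ≤ _ := by linarith
  · have hle : |1 + t| ≤ (s + 1) * |t| := by
      rw [abs_mul, abs_of_pos hs0] at hst
      linarith [abs_add_le 1 t, abs_one (α := ℝ)]
    have hlin : 0 ≤ 1 + s * t + s ^ 2 * t ^ 2 := by nlinarith [sq_nonneg (s * t + 1)]
    calc |1 + t| ^ s ≤ ((s + 1) * |t|) ^ s := Real.rpow_le_rpow (abs_nonneg _) hle hs0.le
      _ = (s + 1) ^ s * |t| ^ s := Real.mul_rpow (by linarith) (abs_nonneg _)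
      _ ≤ _ := by linarith

lemma abs_add_rpow_le (hs : 1 ≤ s) (x y : ℝ) :
    |x + y| ^ s ≤ |x| ^ s + s * (x * |x| ^ (s - 2) * y)
      + rpowTaylorConst s * (|x| ^ (s - 2) * y ^ 2 + |y| ^ s) := by
  rcases eq_or_ne x 0 with rfl | hx
  · have hC : 1 ≤ rpowTaylorConst s := by
      have : 0 ≤ (s + 1) ^ s := by positivity
      unfold rpowTaylorConst; nlinarith
    have hy : |y| ^ s ≤ |(0 : ℝ)| ^ (s - 2) * y ^ 2 + |y| ^ s :=
      le_add_of_nonneg_left (by positivity)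
    have h0 : 0 ≤ |(0 : ℝ)| ^ s := by positivity
    rw [zero_add]
    nlinarith [Real.rpow_nonneg (abs_nonneg y) s]
  · have hx' : 0 < |x| := abs_pos.2 hx
    have hsplit : |x| ^ s = |x| ^ (s - 2) * x ^ 2 := by
      rw [← sq_abs x, ← Real.rpow_natCast |x| 2, ← Real.rpow_add hx']; norm_num
    have hscale (z : ℝ) : |x * z| ^ s = |x| ^ s * |z| ^ s := by
      rw [abs_mul, Real.mul_rpow (abs_nonneg _) (abs_nonneg _)]
    obtain ⟨t, rfl⟩ : ∃ t, y = x * t := ⟨y / x, by field_simp⟩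
    calc |x + x * t| ^ s = |x| ^ s * |1 + t| ^ s := by rw [← hscale, mul_add, mul_one]
      _ ≤ |x| ^ s * (1 + s * t + rpowTaylorConst s * (t ^ 2 + |t| ^ s)) := by
          gcongr; exact abs_one_add_rpow_le hs t
      _ = |x| ^ s + s * (|x| ^ s * t) + rpowTaylorConst s * (|x| ^ s * t ^ 2 + |x * t| ^ s) := by
          rw [hscale]; ring
      _ = _ := by rw [hsplit]; ring

lemma rpow_add_mul_le_add_rpow {h C y : ℝ} (hh : 1 ≤ h) (hC : 0 ≤ C) (hy : 0 ≤ y) :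
    y ^ h + C * (y ^ (h - 1) + 1) ≤ (y + (2 * C + 1)) ^ h := by
  have hsplit {z : ℝ} (hz : 0 ≤ z) : z ^ h = z * z ^ (h - 1) := by
    rw [← Real.rpow_one_add' hz (by linarith)]; ring_nf
  set N := (y + (2 * C + 1)) ^ (h - 1)
  have hyN : y ^ (h - 1) ≤ N := Real.rpow_le_rpow hy (by linarith) (by linarith)
  have hN : 1 ≤ N := Real.one_le_rpow (by linarith) (by linarith)
  calc y ^ h + C * (y ^ (h - 1) + 1) ≤ y * N + C * (N + N) := by rw [hsplit hy]; gcongr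
    _ ≤ (y + (2 * C + 1)) * N := by linarith
    _ = _ := (hsplit (by positivity)).symm

variable {Ω ι : Type*} [MeasurableSpace Ω] {P : Measure Ω}

lemma integrable_abs_rpow_of_memLp [IsFiniteMeasure P] {Z : Ω → ℝ} {a : ℝ} (ha : 0 ≤ a)
    (has : a ≤ s) (hZ : MemLp Z (ENNReal.ofReal s) P) : Integrable (fun ω ↦ |Z ω| ^ a) P := by
  simpa only [ENNReal.toReal_ofReal ha, Real.norm_eq_abs] using
    (hZ.mono_exponent (ENNReal.ofReal_le_ofReal has)).integrable_norm_rpow'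

variable [IsProbabilityMeasure P]

lemma integral_abs_rpow_le_rpow_integral {Z : Ω → ℝ} {a : ℝ} (ha : 0 ≤ a) (has : a ≤ s)
    (hs : 0 < s) (hZ : MemLp Z (ENNReal.ofReal s) P) :
    ∫ ω, |Z ω| ^ a ∂P ≤ (∫ ω, |Z ω| ^ s ∂P) ^ (a / s) := by
  have hpow (ω : Ω) : |Z ω| ^ a = (|Z ω| ^ s) ^ (a / s) := by
    rw [← Real.rpow_mul (abs_nonneg _), mul_div_cancel₀ _ hs.ne']
  have hint := integrable_abs_rpow_of_memLp ha has hZ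
  simp only [hpow] at hint ⊢
  exact (Real.concaveOn_rpow (by positivity) ((div_le_one hs).2 has)).le_map_integral
    (Real.continuous_rpow_const (by positivity)).continuousOn isClosed_Ici
    (.of_forall fun ω ↦ Real.rpow_nonneg (abs_nonneg _) s)
    (integrable_abs_rpow_of_memLp hs.le le_rfl hZ) hint

lemma integral_abs_add_rpow_le_of_indepFun (hs : 2 ≤ s) {S X : Ω → ℝ}
    (hS : MemLp S (ENNReal.ofReal s) P) (hX : MemLp X (ENNReal.ofReal s) P)
    (hSX : IndepFun S X P) (hX0 : ∫ ω, X ω ∂P = 0) :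
    ∫ ω, |S ω + X ω| ^ s ∂P ≤ ∫ ω, |S ω| ^ s ∂P + rpowTaylorConst s *
      ((∫ ω, |S ω| ^ (s - 2) ∂P) * ∫ ω, X ω ^ 2 ∂P + ∫ ω, |X ω| ^ s ∂P) := by
  have hs0 : 0 ≤ s := by linarith
  have hSs := integrable_abs_rpow_of_memLp hs0 le_rfl hS
  have hXs := integrable_abs_rpow_of_memLp hs0 le_rfl hX
  have hSd := integrable_abs_rpow_of_memLp (a := s - 2) (by linarith) (by linarith) hS
  have hX2 : Integrable (fun ω ↦ X ω ^ 2) P := by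
    simpa using integrable_abs_rpow_of_memLp zero_le_two hs hX
  have hX1 : Integrable X P := hX.integrable (ENNReal.one_le_ofReal.2 (by linarith))
  have hS1 : Integrable (fun ω ↦ S ω * |S ω| ^ (s - 2)) P := by
    refine (integrable_abs_rpow_of_memLp (a := s - 1) (by linarith) (by linarith) hS).mono
      (hS.1.mul hSd.1) (.of_forall fun ω ↦ le_of_eq ?_)
    rw [norm_mul, Real.norm_eq_abs, Real.norm_of_nonneg (by positivity),
      Real.norm_of_nonneg (by positivity), ← Real.rpow_one_add' (abs_nonneg _) (by linarith)]
    ring_nf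
  have hind₁ : IndepFun (fun ω ↦ S ω * |S ω| ^ (s - 2)) X P :=
    hSX.comp (φ := fun x ↦ x * |x| ^ (s - 2)) (ψ := id) (by fun_prop) measurable_id
  have hind₂ : IndepFun (fun ω ↦ |S ω| ^ (s - 2)) (fun ω ↦ X ω ^ 2) P :=
    hSX.comp (φ := fun x ↦ |x| ^ (s - 2)) (ψ := fun x ↦ x ^ 2) (by fun_prop) (by fun_prop)
  have hfirst : ∫ ω, S ω * |S ω| ^ (s - 2) * X ω ∂P = 0 := by
    rw [hind₁.integral_fun_mul_eq_mul_integral hS1.1 hX1.1, hX0, mul_zero]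
  have hsecond := hind₂.integral_fun_mul_eq_mul_integral hSd.1 hX2.1
  have hlin' : Integrable (fun ω ↦ s * (S ω * |S ω| ^ (s - 2) * X ω)) P :=
    (hind₁.integrable_mul hS1 hX1).const_mul s
  have hquad' : Integrable (fun ω ↦ |S ω| ^ (s - 2) * X ω ^ 2) P := hind₂.integrable_mul hSd hX2
  have hlin : Integrable (fun ω ↦ |S ω| ^ s + s * (S ω * |S ω| ^ (s - 2) * X ω)) P :=
    hSs.add hlin'
  have hquad : Integrable
      (fun ω ↦ rpowTaylorConst s * (|S ω| ^ (s - 2) * X ω ^ 2 + |X ω| ^ s)) P :=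
    (hquad'.add hXs).const_mul _
  calc ∫ ω, |S ω + X ω| ^ s ∂P
      ≤ ∫ ω, (|S ω| ^ s + s * (S ω * |S ω| ^ (s - 2) * X ω)
          + rpowTaylorConst s * (|S ω| ^ (s - 2) * X ω ^ 2 + |X ω| ^ s)) ∂P :=
        integral_mono (integrable_abs_rpow_of_memLp hs0 le_rfl (hS.add hX)) (hlin.add hquad)
          fun ω ↦ abs_add_rpow_le (by linarith) _ _
    _ = _ := by
        rw [integral_add hlin hquad, integral_add hSs hlin', integral_const_mul,
          integral_const_mul, integral_add hquad' hXs, hfirst, hsecond, mul_zero, add_zero]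

lemma integral_abs_add_rpow_le_of_le (hs : 2 ≤ s) {S X : Ω → ℝ}
    (hS : MemLp S (ENNReal.ofReal s) P) (hX : MemLp X (ENNReal.ofReal s) P)
    (hSX : IndepFun S X P) (hX0 : ∫ ω, X ω ∂P = 0) {y B : ℝ} (hy : 0 ≤ y)
    (hSB : ∫ ω, |S ω| ^ s ∂P ≤ y ^ (s / 2) * B) (hXB : ∫ ω, |X ω| ^ s ∂P ≤ B) :
    ∫ ω, |S ω + X ω| ^ s ∂P ≤ (y + momentConst s) ^ (s / 2) * B := by
  have hs0 : 0 < s := by linarith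
  have hC := rpowTaylorConst_pos hs0
  have hS0 : 0 ≤ ∫ ω, |S ω| ^ s ∂P := by positivity
  have hX0' : 0 ≤ ∫ ω, |X ω| ^ s ∂P := by positivity
  have hB : 0 ≤ B := hX0'.trans hXB
  have hSd : ∫ ω, |S ω| ^ (s - 2) ∂P ≤ y ^ (s / 2 - 1) * B ^ ((s - 2) / s) :=
    calc ∫ ω, |S ω| ^ (s - 2) ∂P ≤ (y ^ (s / 2) * B) ^ ((s - 2) / s) :=
          (integral_abs_rpow_le_rpow_integral (by linarith) (by linarith) hs0 hS).trans
            (Real.rpow_le_rpow hS0 hSB (div_nonneg (by linarith) hs0.le))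
      _ = _ := by
          rw [Real.mul_rpow (by positivity) hB, ← Real.rpow_mul hy]
          congr 2; field_simp
  have hX2 : ∫ ω, X ω ^ 2 ∂P ≤ B ^ (2 / s) := by
    have hjensen := integral_abs_rpow_le_rpow_integral zero_le_two hs hs0 hX
    simp only [Real.rpow_two, sq_abs] at hjensen
    exact hjensen.trans (Real.rpow_le_rpow hX0' hXB (by positivity))
  have hBB : B ^ ((s - 2) / s) * B ^ (2 / s) = B := by
    have hexp : (s - 2) / s + 2 / s = 1 := by field_simp; ring
    rw [← Real.rpow_add' hB (by rw [hexp]; exact one_ne_zero), hexp, Real.rpow_one]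
  calc ∫ ω, |S ω + X ω| ^ s ∂P
      ≤ ∫ ω, |S ω| ^ s ∂P + rpowTaylorConst s *
          ((∫ ω, |S ω| ^ (s - 2) ∂P) * ∫ ω, X ω ^ 2 ∂P + ∫ ω, |X ω| ^ s ∂P) :=
        integral_abs_add_rpow_le_of_indepFun hs hS hX hSX hX0
    _ ≤ y ^ (s / 2) * B + rpowTaylorConst s *
          (y ^ (s / 2 - 1) * B ^ ((s - 2) / s) * B ^ (2 / s) + B) := by gcongr
    _ = (y ^ (s / 2) + rpowTaylorConst s * (y ^ (s / 2 - 1) + 1)) * B := by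
        rw [mul_assoc (y ^ _), hBB]; ring
    _ ≤ (y + momentConst s) ^ (s / 2) * B := by
        gcongr; exact rpow_add_mul_le_add_rpow (by linarith) hC.le hy

theorem integral_abs_sum_rpow_le {X : ι → Ω → ℝ} (hX : iIndepFun X P) (hs : 2 ≤ s)
    (hXs : ∀ i, MemLp (X i) (ENNReal.ofReal s) P) (hX0 : ∀ i, ∫ ω, X i ω ∂P = 0)
    {B : ℝ} (hB : ∀ i, ∫ ω, |X i ω| ^ s ∂P ≤ B) (t : Finset ι) :
    ∫ ω, |∑ i ∈ t, X i ω| ^ s ∂P ≤ (momentConst s * t.card) ^ (s / 2) * B := by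
  classical
  have hs0 : 0 < s := by linarith
  induction t using Finset.induction_on with
  | empty => simp [Real.zero_rpow hs0.ne', Real.zero_rpow (half_pos hs0).ne']
  | insert i t hi ih =>
    have hsum : MemLp (fun ω ↦ ∑ j ∈ t, X j ω) (ENNReal.ofReal s) P :=
      memLp_finsetSum t fun j _ ↦ hXs j
    have hindep : IndepFun (fun ω ↦ ∑ j ∈ t, X j ω) (X i) P := by
      simpa only [Finset.sum_fn] using
        hX.indepFun_finsetSum_of_notMem₀ (fun j ↦ (hXs j).1.aemeasurable) hi
    have hK := momentConst_pos hs0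
    simpa only [Finset.sum_insert hi, add_comm, Finset.card_insert_of_notMem hi, Nat.cast_add_one,
      mul_add_one] using integral_abs_add_rpow_le_of_le hs hsum (hXs i) hindep (hX0 i)
        (by positivity) ih (hB i)

end MomentInequality

section LogJensenGap

/-- The gap in Jensen's inequality for `log` at the midpoint of `a` and `b`. Evaluated at the two
half-sample means it is the antithetic correction `Δψ`. -/
noncomputable def logJensenGap (a b : ℝ) : ℝ :=
  Real.log ((a + b) / 2) - (1 / 2) * (Real.log a + Real.log b)

variable {a b q s : ℝ}

lemma logJensenGap_nonneg (ha : 0 < a) (hb : 0 < b) : 0 ≤ logJensenGap a b := by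
  have hamgm : Real.log (a * b) ≤ Real.log (((a + b) / 2) ^ 2) :=
    Real.log_le_log (by positivity) (by nlinarith [sq_nonneg (a - b)])
  rw [Real.log_mul ha.ne' hb.ne', Real.log_pow, Nat.cast_ofNat] at hamgm
  unfold logJensenGap
  linarith

lemma logJensenGap_mul_left {c : ℝ} (hc : 0 < c) (ha : 0 < a) (hb : 0 < b) :
    logJensenGap (c * a) (c * b) = logJensenGap a b := by
  unfold logJensenGap
  rw [← mul_add, mul_div_assoc, Real.log_mul hc.ne' (by positivity), Real.log_mul hc.ne' ha.ne',
    Real.log_mul hc.ne' hb.ne']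
  ring

lemma logJensenGap_le_max (ha : 0 < a) (hb : 0 < b) :
    logJensenGap a b ≤ max |Real.log a| |Real.log b| := by
  have hmid : Real.log ((a + b) / 2) ≤ max (Real.log a) (Real.log b) := by
    rcases le_total a b with hab | hab
    · exact (Real.log_le_log (by positivity) (by linarith)).trans (le_max_right _ _)
    · exact (Real.log_le_log (by positivity) (by linarith)).trans (le_max_left _ _)
  unfold logJensenGap
  have := neg_abs_le (Real.log a)
  have := neg_abs_le (Real.log b)
  rcases max_cases (Real.log a) (Real.log b) with ⟨hmax, _⟩ | ⟨hmax, _⟩ <;> rw [hmax] at hmid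
  · linarith [le_abs_self (Real.log a), le_max_left |Real.log a| |Real.log b|,
      le_max_right |Real.log a| |Real.log b|]
  · linarith [le_abs_self (Real.log b), le_max_left |Real.log a| |Real.log b|,
      le_max_right |Real.log a| |Real.log b|]

lemma logJensenGap_le_sq (ha : 1 / 2 ≤ a) (hb : 1 / 2 ≤ b) :
    logJensenGap a b ≤ (a - b) ^ 2 / 2 := by
  have ha0 : 0 < a := by linarith
  have hb0 : 0 < b := by linarith
  have hlog : 2 * logJensenGap a b = Real.log (((a + b) / 2) ^ 2 / (a * b)) := by
    rw [Real.log_div (by positivity) (by positivity), Real.log_mul ha0.ne' hb0.ne', Real.log_pow,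
      logJensenGap]
    push_cast
    ring
  have hsq : (a - b) ^ 2 / (4 * (a * b)) ≤ (a - b) ^ 2 :=
    div_le_self (sq_nonneg _) (by nlinarith)
  have hsub : ((a + b) / 2) ^ 2 / (a * b) - 1 = (a - b) ^ 2 / (4 * (a * b)) := by field_simp; ring
  linarith [Real.log_le_sub_one_of_pos (show 0 < ((a + b) / 2) ^ 2 / (a * b) by positivity)]

-- Near `a = b = 1` the gap is quadratic in `W = max |a - 1| |b - 1|`; away from it `4 * W ^ τ ≥ 1`.
lemma logJensenGap_le_mul_rpow {τ : ℝ} (ha : 0 < a) (hb : 0 < b) (hτ0 : 0 ≤ τ) (hτ2 : τ ≤ 2) :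
    logJensenGap a b ≤ 4 * (1 + logJensenGap a b) * max |a - 1| |b - 1| ^ τ := by
  set W := max |a - 1| |b - 1|
  have hgap := logJensenGap_nonneg ha hb
  have hW0 : 0 ≤ W := (abs_nonneg _).trans (le_max_left _ _)
  rcases le_or_gt W (1 / 2) with hW | hW
  · obtain ⟨ha₁, ha₂⟩ := abs_le.1 (le_max_left |a - 1| |b - 1|)
    obtain ⟨hb₁, hb₂⟩ := abs_le.1 (le_max_right |a - 1| |b - 1|)
    have hWτ : W ^ 2 ≤ W ^ τ := by
      rcases hW0.eq_or_lt with h0 | h0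
      · rw [← h0, zero_pow two_ne_zero]; positivity
      · rw [← Real.rpow_two]
        exact Real.rpow_le_rpow_of_exponent_ge h0 (by linarith) hτ2
    calc logJensenGap a b ≤ (a - b) ^ 2 / 2 := logJensenGap_le_sq (by linarith) (by linarith)
      _ ≤ 4 * 1 * W ^ 2 := by nlinarith
      _ ≤ 4 * (1 + logJensenGap a b) * W ^ τ := by gcongr; linarith
  · have hfar : 1 ≤ 4 * W ^ τ :=
      calc 1 ≤ (2 * W) ^ τ := Real.one_le_rpow (by linarith) hτ0
        _ = 2 ^ τ * W ^ τ := Real.mul_rpow zero_le_two hW0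
        _ ≤ 2 ^ (2 : ℝ) * W ^ τ := by gcongr; norm_num
        _ = 4 * W ^ τ := by norm_num
    calc logJensenGap a b ≤ (1 + logJensenGap a b) * 1 := by linarith
      _ ≤ (1 + logJensenGap a b) * (4 * W ^ τ) := by gcongr
      _ = _ := by ring

lemma rpow_max_le_add {x y : ℝ} (hx : 0 ≤ x) (hy : 0 ≤ y) : max x y ^ q ≤ x ^ q + y ^ q := by
  rcases max_cases x y with ⟨hmax, _⟩ | ⟨hmax, _⟩ <;> rw [hmax]
  · exact le_add_of_nonneg_right (by positivity)
  · exact le_add_of_nonneg_left (by positivity)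

lemma one_add_logJensenGap_rpow_le (ha : 0 < a) (hb : 0 < b) (hq : 0 ≤ q) :
    (4 * (1 + logJensenGap a b)) ^ q ≤ 8 ^ q * (1 + |Real.log a| ^ q + |Real.log b| ^ q) := by
  have hgap := logJensenGap_nonneg ha hb
  have hmax : 4 * (1 + logJensenGap a b) ≤ 8 * max 1 (logJensenGap a b) := by
    linarith [le_max_left 1 (logJensenGap a b), le_max_right 1 (logJensenGap a b)]
  have hlog : logJensenGap a b ^ q ≤ |Real.log a| ^ q + |Real.log b| ^ q :=
    (Real.rpow_le_rpow hgap (logJensenGap_le_max ha hb) hq).trans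
      (rpow_max_le_add (abs_nonneg _) (abs_nonneg _))
  calc (4 * (1 + logJensenGap a b)) ^ q ≤ (8 * max 1 (logJensenGap a b)) ^ q := by gcongr
    _ = 8 ^ q * max 1 (logJensenGap a b) ^ q := Real.mul_rpow (by norm_num) (by positivity)
    _ ≤ 8 ^ q * (1 ^ q + logJensenGap a b ^ q) := by
        gcongr; exact rpow_max_le_add zero_le_one hgap
    _ ≤ 8 ^ q * (1 + |Real.log a| ^ q + |Real.log b| ^ q) := by
        rw [Real.one_rpow, add_assoc]; gcongr

lemma logJensenGap_sq_le (ha : 0 < a) (hb : 0 < b) (hs : 0 ≤ s) (hq : 2 < q)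
    (hsq : s ≤ 4 * q / (q - 2)) :
    logJensenGap a b ^ 2 ≤ (8 ^ q * (1 + |Real.log a| ^ q + |Real.log b| ^ q)) ^ (2 / q) *
      (|a - 1| ^ s + |b - 1| ^ s) ^ ((q - 2) / q) := by
  have hq2 : 0 < q - 2 := by linarith
  have hgap := logJensenGap_nonneg ha hb
  set W := max |a - 1| |b - 1|
  have hW0 : 0 ≤ W := (abs_nonneg _).trans (le_max_left _ _)
  have hτ2 : s * ((q - 2) / q) / 2 ≤ 2 := by
    rw [le_div_iff₀ hq2] at hsq
    rw [← mul_div_assoc, div_div, div_le_iff₀ (by positivity)]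
    linarith
  calc logJensenGap a b ^ 2
      ≤ (4 * (1 + logJensenGap a b) * W ^ (s * ((q - 2) / q) / 2)) ^ 2 := by
        gcongr; exact logJensenGap_le_mul_rpow ha hb (by positivity) hτ2
    _ = ((4 * (1 + logJensenGap a b)) ^ q) ^ (2 / q) * (W ^ s) ^ ((q - 2) / q) := by
        rw [mul_pow, ← Real.rpow_mul (by positivity), ← Real.rpow_mul hW0,
          ← Real.rpow_mul_natCast hW0, mul_div_cancel₀ _ (by positivity), Real.rpow_two,
          Nat.cast_ofNat, div_mul_cancel₀ _ two_ne_zero]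
    _ ≤ _ := by
        gcongr
        · exact one_add_logJensenGap_rpow_le ha hb (by linarith)
        · exact rpow_max_le_add (abs_nonneg _) (abs_nonneg _)

end LogJensenGap

section SampleMean

open scoped BigOperators

variable {ι : Type*} {A : Finset ι} {y : ι → ℝ} {q s : ℝ}

lemma map_expect_le_of_convexOn {S : Set ℝ} {φ : ℝ → ℝ} (hφ : ConvexOn ℝ S φ) (hA : A.Nonempty)
    (hy : ∀ i ∈ A, y i ∈ S) : φ (𝔼 i ∈ A, y i) ≤ 𝔼 i ∈ A, φ (y i) := by
  have hcard : (A.card : ℝ) ≠ 0 := by simpa using hA.ne_empty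
  have hjensen := hφ.map_sum_le (t := A) (w := fun _ ↦ (A.card : ℝ)⁻¹) (p := y)
    (fun _ _ ↦ by positivity) (by simp [hcard]) hy
  simpa only [Finset.expect_eq_sum_div_card, div_eq_inv_mul, Finset.mul_sum, smul_eq_mul]
    using hjensen

lemma abs_log_expect_le_of_expect_le_one (hA : A.Nonempty) (hy : ∀ i ∈ A, 0 < y i)
    (h1 : 𝔼 i ∈ A, y i ≤ 1) :
    |Real.log (𝔼 i ∈ A, y i)| ≤ 𝔼 i ∈ A, |Real.log (y i)| := by
  have h0 : 0 ≤ 𝔼 i ∈ A, y i := Finset.expect_nonneg fun i hi ↦ (hy i hi).le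
  calc |Real.log (𝔼 i ∈ A, y i)| = -Real.log (𝔼 i ∈ A, y i) :=
        abs_of_nonpos (Real.log_nonpos h0 h1)
    _ ≤ 𝔼 i ∈ A, -Real.log (y i) :=
        map_expect_le_of_convexOn strictConcaveOn_log_Ioi.concaveOn.neg hA hy
    _ ≤ 𝔼 i ∈ A, |Real.log (y i)| := Finset.expect_le_expect fun i _ ↦ neg_le_abs _

-- A large mean is controlled by `log a ^ q ≤ q ^ q * a`, a small one by convexity of `-log`.
lemma abs_log_expect_rpow_le (hA : A.Nonempty) (hy : ∀ i ∈ A, 0 < y i) (hq : 1 ≤ q) :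
    |Real.log (𝔼 i ∈ A, y i)| ^ q ≤
      q ^ q * (𝔼 i ∈ A, y i) + 𝔼 i ∈ A, |Real.log (y i)| ^ q := by
  have hq0 : 0 < q := by linarith
  have hmean : 0 ≤ 𝔼 i ∈ A, y i := Finset.expect_nonneg fun i hi ↦ (hy i hi).le
  have hlog : 0 ≤ 𝔼 i ∈ A, |Real.log (y i)| ^ q := Finset.expect_nonneg fun i _ ↦ by positivity
  rcases le_total (𝔼 i ∈ A, y i) 1 with h1 | h1
  · calc |Real.log (𝔼 i ∈ A, y i)| ^ q ≤ (𝔼 i ∈ A, |Real.log (y i)|) ^ q := by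
          gcongr; exact abs_log_expect_le_of_expect_le_one hA hy h1
      _ ≤ 𝔼 i ∈ A, |Real.log (y i)| ^ q :=
          map_expect_le_of_convexOn (convexOn_rpow hq) hA fun i _ ↦
            Set.mem_Ici.2 (abs_nonneg (Real.log (y i)))
      _ ≤ _ := le_add_of_nonneg_left (by positivity)
  · set a := 𝔼 i ∈ A, y i
    have hroot : Real.log a ≤ q * a ^ q⁻¹ := by
      simpa [mul_comm] using Real.log_le_rpow_div hmean (inv_pos.2 hq0)
    calc |Real.log a| ^ q ≤ (q * a ^ q⁻¹) ^ q := by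
          rw [abs_of_nonneg (Real.log_nonneg h1)]
          exact Real.rpow_le_rpow (Real.log_nonneg h1) hroot hq0.le
      _ = q ^ q * a := by
          rw [Real.mul_rpow hq0.le (by positivity), Real.rpow_inv_rpow hmean hq0.ne']
      _ ≤ _ := le_add_of_nonneg_right hlog

variable {𝒳 : Type*} [MeasurableSpace 𝒳] {P : Measure 𝒳} {F Y : 𝒳 → ℝ}

@[fun_prop]
lemma measurable_expect_comp (hF : Measurable F) :
    Measurable fun x : ι → 𝒳 ↦ 𝔼 i ∈ A, F (x i) := by
  simp only [Finset.expect_eq_sum_div_card]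
  fun_prop

variable [Fintype ι] [IsProbabilityMeasure P]

lemma ae_pi_forall {p : 𝒳 → Prop} (hp : ∀ᵐ y ∂P, p y) :
    ∀ᵐ x ∂Measure.pi fun _ : ι ↦ P, ∀ i, p (x i) :=
  ae_all_iff.2 fun i ↦ (measurePreserving_eval (fun _ ↦ P) i).quasiMeasurePreserving.ae hp

lemma lintegral_expect (hF : Measurable F) (hF0 : ∀ᵐ y ∂P, 0 ≤ F y) (hA : A.Nonempty) :
    ∫⁻ x : ι → 𝒳, ENNReal.ofReal (𝔼 i ∈ A, F (x i)) ∂(Measure.pi fun _ ↦ P)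
      = ∫⁻ y, ENNReal.ofReal (F y) ∂P := by
  have hcard : (A.card : ENNReal) ≠ 0 := by simpa using hA.ne_empty
  have hsplit : ∀ᵐ x ∂Measure.pi fun _ : ι ↦ P, ENNReal.ofReal (𝔼 i ∈ A, F (x i))
      = (A.card : ENNReal)⁻¹ * ∑ i ∈ A, ENNReal.ofReal (F (x i)) := by
    filter_upwards [ae_pi_forall hF0] with x hx
    rw [Finset.expect_eq_sum_div_card, ENNReal.ofReal_div_of_pos (by simpa using hA),
      ENNReal.ofReal_sum_of_nonneg fun i _ ↦ hx i, ENNReal.ofReal_natCast, ENNReal.div_eq_inv_mul]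
  have heval (i : ι) : ∫⁻ x : ι → 𝒳, ENNReal.ofReal (F (x i)) ∂(Measure.pi fun _ ↦ P)
      = ∫⁻ y, ENNReal.ofReal (F y) ∂P :=
    (measurePreserving_eval (fun _ ↦ P) i).lintegral_comp hF.ennreal_ofReal
  rw [lintegral_congr_ae hsplit, lintegral_const_mul _ (by fun_prop),
    lintegral_finsetSum _ (fun i _ ↦ by fun_prop)]
  simp only [heval, Finset.sum_const, nsmul_eq_mul]
  rw [← mul_assoc, ENNReal.inv_mul_cancel hcard (ENNReal.natCast_ne_top _), one_mul]

lemma lintegral_abs_log_expect_rpow_le (hY : Measurable Y) (hY0 : ∀ᵐ y ∂P, 0 < Y y)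
    (hA : A.Nonempty) (hq : 1 ≤ q) :
    ∫⁻ x : ι → 𝒳, ENNReal.ofReal (|Real.log (𝔼 i ∈ A, Y (x i))| ^ q) ∂(Measure.pi fun _ ↦ P)
      ≤ ENNReal.ofReal (q ^ q) * ∫⁻ y, ENNReal.ofReal (Y y) ∂P
        + ∫⁻ y, ENNReal.ofReal (|Real.log (Y y)| ^ q) ∂P := by
  have hqq : 0 ≤ q ^ q := by positivity
  calc ∫⁻ x : ι → 𝒳, ENNReal.ofReal (|Real.log (𝔼 i ∈ A, Y (x i))| ^ q) ∂(Measure.pi fun _ ↦ P)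
      ≤ ∫⁻ x : ι → 𝒳, (ENNReal.ofReal (q ^ q) * ENNReal.ofReal (𝔼 i ∈ A, Y (x i))
          + ENNReal.ofReal (𝔼 i ∈ A, |Real.log (Y (x i))| ^ q)) ∂(Measure.pi fun _ ↦ P) := by
        refine lintegral_mono_ae ?_
        filter_upwards [ae_pi_forall hY0] with x hx
        rw [← ENNReal.ofReal_mul hqq, ← ENNReal.ofReal_add
          (mul_nonneg hqq (Finset.expect_nonneg fun i _ ↦ (hx i).le))
          (Finset.expect_nonneg fun i _ ↦ by positivity)]
        exact ENNReal.ofReal_le_ofReal (abs_log_expect_rpow_le hA (fun i _ ↦ hx i) hq)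
    _ = _ := by
        rw [lintegral_add_left (by fun_prop), lintegral_const_mul _ (by fun_prop),
          lintegral_expect hY (hY0.mono fun _ h ↦ h.le) hA,
          lintegral_expect (F := fun y ↦ |Real.log (Y y)| ^ q) (by fun_prop)
            (.of_forall fun _ ↦ by positivity) hA]

lemma lintegral_abs_expect_rpow_le (hs : 2 ≤ s) (hY : MemLp Y (ENNReal.ofReal s) P)
    (hY0 : ∫ y, Y y ∂P = 0) (hA : A.Nonempty) :
    ∫⁻ x : ι → 𝒳, ENNReal.ofReal (|𝔼 i ∈ A, Y (x i)| ^ s) ∂(Measure.pi fun _ ↦ P)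
      ≤ ENNReal.ofReal ((momentConst s / A.card) ^ (s / 2))
        * ∫⁻ y, ENNReal.ofReal (|Y y| ^ s) ∂P := by
  have hs0 : 0 < s := by linarith
  have hK := momentConst_pos hs0
  have hn : (0 : ℝ) < A.card := by simpa using hA
  have hYs := integrable_abs_rpow_of_memLp hs0.le le_rfl hY
  have heval (i : ι) : MemLp (fun x : ι → 𝒳 ↦ Y (x i)) (ENNReal.ofReal s)
      (Measure.pi fun _ ↦ P) :=
    hY.comp_measurePreserving (measurePreserving_eval (fun _ ↦ P) i)
  have hsum := integrable_abs_rpow_of_memLp hs0.le le_rfl (memLp_finsetSum A fun i _ ↦ heval i)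
  have hscale (x : ι → 𝒳) :
      |𝔼 i ∈ A, Y (x i)| ^ s = (A.card ^ s : ℝ)⁻¹ * |∑ i ∈ A, Y (x i)| ^ s := by
    rw [Finset.expect_eq_sum_div_card, abs_div, Nat.abs_cast,
      Real.div_rpow (abs_nonneg _) hn.le, div_eq_inv_mul]
  have hmoment := integral_abs_sum_rpow_le (iIndepFun_pi fun _ : ι ↦ hY.1.aemeasurable) hs heval
    (fun i ↦ (integral_comp_eval hY.1).trans hY0)
    (fun i ↦ (integral_comp_eval (μ := fun _ : ι ↦ P) (i := i) hYs.1).le) A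
  have hconst : (A.card ^ s : ℝ)⁻¹ * (momentConst s * A.card) ^ (s / 2)
      = (momentConst s / A.card) ^ (s / 2) := by
    have hsq : (A.card ^ s : ℝ) = (A.card ^ 2 : ℝ) ^ (s / 2) := by
      rw [← Real.rpow_natCast_mul hn.le, Nat.cast_ofNat, mul_div_cancel₀ _ two_ne_zero]
    rw [hsq, ← Real.inv_rpow (by positivity), ← Real.mul_rpow (by positivity) (by positivity)]
    congr 1; field_simp
  simp only [hscale]
  rw [← ofReal_integral_eq_lintegral_ofReal (hsum.const_mul _) (.of_forall fun _ ↦ by positivity),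
    ← ofReal_integral_eq_lintegral_ofReal hYs (.of_forall fun _ ↦ by positivity),
    ← ENNReal.ofReal_mul (by positivity), integral_const_mul, ← hconst, mul_assoc]
  gcongr

end SampleMean

section AntitheticSampleMeans

open scoped BigOperators

variable {ι 𝒳 : Type*} [Fintype ι] [MeasurableSpace 𝒳] {P : Measure 𝒳} [IsProbabilityMeasure P]
  {A B : Finset ι} {Y : 𝒳 → ℝ} {q s : ℝ}

lemma lintegral_abs_log_expect_add_le (hY : Measurable Y) (hY0 : ∀ᵐ y ∂P, 0 < Y y)
    (hY1 : ∫ y, Y y ∂P = 1) (hA : A.Nonempty) (hB : B.Nonempty) (hq : 1 ≤ q) :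
    ∫⁻ x : ι → 𝒳, ENNReal.ofReal (1 + |Real.log (𝔼 i ∈ A, Y (x i))| ^ q
        + |Real.log (𝔼 i ∈ B, Y (x i))| ^ q) ∂(Measure.pi fun _ ↦ P)
      ≤ ENNReal.ofReal (2 + 2 * q ^ q) * ∫⁻ y, ENNReal.ofReal (1 + |Real.log (Y y)| ^ q) ∂P := by
  have hY1' : ∫⁻ y, ENNReal.ofReal (Y y) ∂P = 1 := by
    rw [← ofReal_integral_eq_lintegral_ofReal
      (.of_integral_ne_zero (hY1 ▸ one_ne_zero)) (hY0.mono fun _ h ↦ h.le), hY1, ENNReal.ofReal_one]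
  have hmean {D : Finset ι} (hD : D.Nonempty) :=
    lintegral_abs_log_expect_rpow_le (ι := ι) hY hY0 hD hq
  simp only [hY1', mul_one] at hmean
  have : 0 < q := by linarith
  simp (disch := positivity) only [ENNReal.ofReal_add, ENNReal.ofReal_mul, ENNReal.ofReal_one,
    ENNReal.ofReal_ofNat]
  rw [lintegral_add_left (by fun_prop), lintegral_add_left (by fun_prop),
    lintegral_add_left (by fun_prop)]
  simp only [lintegral_const, measure_univ, mul_one]
  set c := ENNReal.ofReal (q ^ q)
  set L := ∫⁻ y, ENNReal.ofReal (|Real.log (Y y)| ^ q) ∂P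
  calc _ ≤ 1 + (c + L) + (c + L) := by gcongr; exacts [hmean hA, hmean hB]
    _ ≤ 1 + (c + L) + (c + L) + (1 + 2 * c * L) := le_self_add
    _ = (2 + 2 * c) * (1 + L) := by ring

lemma lintegral_abs_expect_sub_one_add_le (hs : 2 ≤ s) (hYs : MemLp Y (ENNReal.ofReal s) P)
    (hY : Measurable Y) (hY1 : ∫ y, Y y ∂P = 1) (hA : A.Nonempty) (hB : B.card = A.card) :
    ∫⁻ x : ι → 𝒳, ENNReal.ofReal (|𝔼 i ∈ A, Y (x i) - 1| ^ s + |𝔼 i ∈ B, Y (x i) - 1| ^ s)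
        ∂(Measure.pi fun _ ↦ P)
      ≤ ENNReal.ofReal (2 * (momentConst s / A.card) ^ (s / 2))
        * ∫⁻ y, ENNReal.ofReal (|Y y - 1| ^ s) ∂P := by
  have := momentConst_pos (show 0 < s by linarith)
  have hint : Integrable Y P := .of_integral_ne_zero (hY1 ▸ one_ne_zero)
  have hmean : ∫ y, (Y y - 1) ∂P = 0 := by
    rw [integral_sub hint (integrable_const 1), hY1]; simp
  have hcentred : MemLp (fun y ↦ Y y - 1) (ENNReal.ofReal s) P := hYs.sub (memLp_const 1)
  have hdev {D : Finset ι} (hD : D.card = A.card) :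
      ∫⁻ x : ι → 𝒳, ENNReal.ofReal (|𝔼 i ∈ D, Y (x i) - 1| ^ s) ∂(Measure.pi fun _ ↦ P)
        ≤ ENNReal.ofReal ((momentConst s / A.card) ^ (s / 2))
          * ∫⁻ y, ENNReal.ofReal (|Y y - 1| ^ s) ∂P := by
    have hD0 : D.Nonempty := by rwa [← Finset.card_pos, hD, Finset.card_pos]
    simpa only [Finset.expect_sub_distrib, Finset.expect_const hD0, hD] using
      lintegral_abs_expect_rpow_le hs hcentred hmean hD0
  simp (disch := positivity) only [ENNReal.ofReal_add, ENNReal.ofReal_mul, ENNReal.ofReal_ofNat]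
  rw [lintegral_add_left (by fun_prop), mul_assoc, two_mul]
  exact add_le_add (hdev rfl) (hdev hB)

lemma lintegral_logJensenGap_sq_le (hY : Measurable Y) (hY0 : ∀ᵐ y ∂P, 0 < Y y)
    (hY1 : ∫ y, Y y ∂P = 1) (hYs : MemLp Y (ENNReal.ofReal s) P) (hs : 2 ≤ s) (hq : 2 < q)
    (hsq : s ≤ 4 * q / (q - 2)) (hA : A.Nonempty) (hB : B.card = A.card) :
    ∫⁻ x : ι → 𝒳, ENNReal.ofReal (logJensenGap (𝔼 i ∈ A, Y (x i)) (𝔼 i ∈ B, Y (x i)) ^ 2)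
        ∂(Measure.pi fun _ ↦ P)
      ≤ (ENNReal.ofReal (8 ^ q * (2 + 2 * q ^ q))
          * ∫⁻ y, ENNReal.ofReal (1 + |Real.log (Y y)| ^ q) ∂P) ^ (2 / q)
        * (ENNReal.ofReal (2 * (momentConst s / A.card) ^ (s / 2))
          * ∫⁻ y, ENNReal.ofReal (|Y y - 1| ^ s) ∂P) ^ ((q - 2) / q) := by
  have : 0 < q - 2 := by linarith
  have hB0 : B.Nonempty := by rwa [← Finset.card_pos, hB, Finset.card_pos]
  set a : (ι → 𝒳) → ℝ := fun x ↦ 𝔼 i ∈ A, Y (x i)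
  set b : (ι → 𝒳) → ℝ := fun x ↦ 𝔼 i ∈ B, Y (x i)
  have ha : Measurable a := by fun_prop
  have hb : Measurable b := by fun_prop
  calc ∫⁻ x, ENNReal.ofReal (logJensenGap (a x) (b x) ^ 2) ∂(Measure.pi fun _ ↦ P)
      ≤ ∫⁻ x, ENNReal.ofReal (8 ^ q * (1 + |Real.log (a x)| ^ q + |Real.log (b x)| ^ q)) ^ (2 / q)
          * ENNReal.ofReal (|a x - 1| ^ s + |b x - 1| ^ s) ^ ((q - 2) / q)
          ∂(Measure.pi fun _ ↦ P) := by
        refine lintegral_mono_ae ?_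
        filter_upwards [ae_pi_forall hY0] with x hx
        rw [ENNReal.ofReal_rpow_of_nonneg (by positivity) (by positivity),
          ENNReal.ofReal_rpow_of_nonneg (by positivity) (by positivity),
          ← ENNReal.ofReal_mul (by positivity)]
        exact ENNReal.ofReal_le_ofReal (logJensenGap_sq_le
          (Finset.expect_pos (fun i _ ↦ hx i) hA) (Finset.expect_pos (fun i _ ↦ hx i) hB0)
          (by linarith) hq hsq)
    _ ≤ (∫⁻ x, ENNReal.ofReal (8 ^ q * (1 + |Real.log (a x)| ^ q + |Real.log (b x)| ^ q))
            ∂(Measure.pi fun _ ↦ P)) ^ (2 / q)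
          * (∫⁻ x, ENNReal.ofReal (|a x - 1| ^ s + |b x - 1| ^ s)
            ∂(Measure.pi fun _ ↦ P)) ^ ((q - 2) / q) :=
        ENNReal.lintegral_mul_norm_pow_le (by fun_prop) (by fun_prop) (by positivity)
          (by positivity) (by field_simp; ring)
    _ ≤ _ := by
        simp (disch := positivity) only [ENNReal.ofReal_mul (p := 8 ^ q)]
        rw [lintegral_const_mul _ (by fun_prop), mul_assoc]
        gcongr
        · exact lintegral_abs_log_expect_add_le hY hY0 hY1 hA hB0 (by linarith)
        · exact lintegral_abs_expect_sub_one_add_le hs hYs hY hY1 hA hB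

lemma lintegral_logJensenGap_sq_mul_le {f : 𝒳 → ℝ} (hf : Measurable f) (hf0 : ∀ᵐ y ∂P, 0 < f y)
    (hm : 0 < ∫ y, f y ∂P) (hfs : MemLp (fun y ↦ f y / ∫ z, f z ∂P) (ENNReal.ofReal s) P)
    (hs : 2 ≤ s) (hq : 2 < q) (hsq : s ≤ 4 * q / (q - 2)) (hA : A.Nonempty)
    (hB : B.card = A.card) {γ : ℝ} (hγ : 0 ≤ γ) :
    ∫⁻ x : ι → 𝒳, ENNReal.ofReal (logJensenGap (𝔼 i ∈ A, f (x i)) (𝔼 i ∈ B, f (x i)) ^ 2 * γ ^ 2)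
        ∂(Measure.pi fun _ ↦ P)
      ≤ (ENNReal.ofReal (8 ^ q * (2 + 2 * q ^ q)) *
          ∫⁻ y, ENNReal.ofReal ((1 + |Real.log (f y / ∫ z, f z ∂P)| ^ q) * γ ^ q) ∂P) ^ (2 / q)
        * (ENNReal.ofReal (2 * (momentConst s / A.card) ^ (s / 2))
          * ∫⁻ y, ENNReal.ofReal (|f y / ∫ z, f z ∂P - 1| ^ s) ∂P) ^ ((q - 2) / q) := by
  have hq0 : 0 < q := by linarith
  set m := ∫ y, f y ∂P
  have hγq : ENNReal.ofReal (γ ^ 2) = ENNReal.ofReal (γ ^ q) ^ (2 / q) := by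
    rw [ENNReal.ofReal_rpow_of_nonneg (by positivity) (by positivity), ← Real.rpow_mul hγ,
      mul_div_cancel₀ _ hq0.ne', Real.rpow_two]
  have hscale : ∀ᵐ x ∂Measure.pi fun _ : ι ↦ P,
      ENNReal.ofReal (logJensenGap (𝔼 i ∈ A, f (x i)) (𝔼 i ∈ B, f (x i)) ^ 2 * γ ^ 2)
        = ENNReal.ofReal (logJensenGap (𝔼 i ∈ A, f (x i) / m) (𝔼 i ∈ B, f (x i) / m) ^ 2)
          * ENNReal.ofReal (γ ^ 2) := by
    have hB0 : B.Nonempty := by rwa [← Finset.card_pos, hB, Finset.card_pos]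
    filter_upwards [ae_pi_forall hf0] with x hx
    rw [← ENNReal.ofReal_mul (sq_nonneg _), ← logJensenGap_mul_left hm
      (Finset.expect_pos (fun i _ ↦ div_pos (hx i) hm) hA)
      (Finset.expect_pos (fun i _ ↦ div_pos (hx i) hm) hB0), ← Finset.expect_div,
      ← Finset.expect_div, mul_div_cancel₀ _ hm.ne', mul_div_cancel₀ _ hm.ne']
  have hbound := lintegral_logJensenGap_sq_le (ι := ι) (A := A) (hf.div_const m)
    (hf0.mono fun _ h ↦ div_pos h hm) (by rw [integral_div]; exact div_self hm.ne') hfs hs hq hsq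
    hA hB
  rw [lintegral_congr_ae hscale, lintegral_mul_const' _ _ ENNReal.ofReal_ne_top]
  calc _ ≤ _ := mul_le_mul_left hbound _
    _ = _ := by
      simp (disch := positivity) only [ENNReal.ofReal_mul (q := γ ^ q)]
      rw [lintegral_mul_const' _ _ ENNReal.ofReal_ne_top, hγq, mul_right_comm, ← mul_assoc,
        ENNReal.mul_rpow_of_nonneg _ (ENNReal.ofReal (γ ^ q)) (by positivity)]

end AntitheticSampleMeans

section Disintegration

open scoped BigOperators

variable {Θ 𝒳 : Type*} [MeasurableSpace Θ] [MeasurableSpace 𝒳] {ν : Measure Θ} {κ : Kernel Θ 𝒳}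

lemma measurable_div_integral_kernel {f : 𝒳 → ℝ} (hf : Measurable f) :
    Measurable fun z : Θ × 𝒳 ↦ f z.2 / ∫ x, f x ∂(κ z.1) :=
  (hf.comp measurable_snd).div
    ((hf.stronglyMeasurable.integral_kernel (κ := κ)).measurable.comp measurable_fst)

variable [SFinite ν]

lemma ae_memLp_of_memLp_compProd [IsSFiniteKernel κ] {F : Θ × 𝒳 → ℝ} (hF : Measurable F)
    {s : ℝ} (hs : 0 < s) (hFs : MemLp F (ENNReal.ofReal s) (ν ⊗ₘ κ)) :
    ∀ᵐ θ ∂ν, MemLp (fun x ↦ F (θ, x)) (ENNReal.ofReal s) (κ θ) := by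
  have hs0 : ENNReal.ofReal s ≠ 0 := by simpa using hs
  have hpow := hFs.integrable_norm_rpow hs0 ENNReal.ofReal_ne_top
  filter_upwards [((Measure.integrable_compProd_iff hpow.1).1 hpow).1] with θ hθ
  exact (integrable_norm_rpow_iff (hF.comp measurable_prodMk_left).aestronglyMeasurable hs0
    ENNReal.ofReal_ne_top).1 hθ

lemma lintegral_le_rpow_mul_rpow_lintegral_compProd [IsSFiniteKernel κ] {Φ : Θ → ENNReal}
    {F G : Θ × 𝒳 → ENNReal} (hF : Measurable F) (hG : Measurable G) {a b : ℝ} (ha : 0 ≤ a)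
    (hb : 0 ≤ b) (hab : a + b = 1) {c d : ENNReal} (hΦ : ∀ᵐ θ ∂ν,
      Φ θ ≤ (c * ∫⁻ x, F (θ, x) ∂(κ θ)) ^ a * (d * ∫⁻ x, G (θ, x) ∂(κ θ)) ^ b) :
    ∫⁻ θ, Φ θ ∂ν ≤ (c * ∫⁻ z, F z ∂(ν ⊗ₘ κ)) ^ a * (d * ∫⁻ z, G z ∂(ν ⊗ₘ κ)) ^ b := by
  have hF' := hF.lintegral_kernel_prod_right' (κ := κ)
  have hG' := hG.lintegral_kernel_prod_right' (κ := κ)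
  rw [Measure.lintegral_compProd hF, Measure.lintegral_compProd hG, ← lintegral_const_mul _ hF',
    ← lintegral_const_mul _ hG']
  exact (lintegral_mono_ae hΦ).trans (ENNReal.lintegral_mul_norm_pow_le
    (hF'.const_mul c).aemeasurable (hG'.const_mul d).aemeasurable ha hb hab)

variable [IsMarkovKernel κ] {ι : Type*} [Fintype ι] {A B : Finset ι} {f : 𝒳 → ℝ}
  {g : Θ → ℝ} {q s : ℝ}

lemma lintegral_lintegral_logJensenGap_sq_mul_le (hf : Measurable f) (hg : Measurable g)
    (hg0 : ∀ θ, 0 ≤ g θ) (hf0 : ∀ᵐ z ∂(ν ⊗ₘ κ), 0 < f z.2)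
    (hm : ∀ᵐ θ ∂ν, 0 < ∫ x, f x ∂(κ θ))
    (hfs : MemLp (fun z : Θ × 𝒳 ↦ f z.2 / ∫ x, f x ∂(κ z.1)) (ENNReal.ofReal s) (ν ⊗ₘ κ))
    (hs : 2 ≤ s) (hq : 2 < q) (hsq : s ≤ 4 * q / (q - 2)) (hA : A.Nonempty)
    (hB : B.card = A.card) :
    ∫⁻ θ, ∫⁻ x : ι → 𝒳,
        ENNReal.ofReal (logJensenGap (𝔼 i ∈ A, f (x i)) (𝔼 i ∈ B, f (x i)) ^ 2 * g θ ^ 2)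
        ∂(Measure.pi fun _ ↦ κ θ) ∂ν
      ≤ (ENNReal.ofReal (8 ^ q * (2 + 2 * q ^ q)) * ∫⁻ z : Θ × 𝒳, ENNReal.ofReal
          ((1 + |Real.log (f z.2 / ∫ x, f x ∂(κ z.1))| ^ q) * g z.1 ^ q) ∂(ν ⊗ₘ κ)) ^ (2 / q)
        * (ENNReal.ofReal (2 * (momentConst s / A.card) ^ (s / 2)) * ∫⁻ z : Θ × 𝒳,
          ENNReal.ofReal (|f z.2 / ∫ x, f x ∂(κ z.1) - 1| ^ s) ∂(ν ⊗ₘ κ)) ^ ((q - 2) / q) := by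
  have : 0 < q - 2 := by linarith
  have hratio := measurable_div_integral_kernel (κ := κ) hf
  refine lintegral_le_rpow_mul_rpow_lintegral_compProd (by fun_prop) (by fun_prop) (by positivity)
    (by positivity) (by field_simp; ring) ?_
  filter_upwards [hm, Measure.ae_ae_of_ae_compProd hf0,
    ae_memLp_of_memLp_compProd hratio (by linarith) hfs] with θ hmθ hfθ hfsθ
  exact lintegral_logJensenGap_sq_mul_le hf hfθ hmθ hfsθ hs hq hsq hA hB (hg0 θ)

end Disintegration

section Rate

open scoped BigOperators

lemma min_half_mul_eq_min {p q : ℝ} (hq : 2 < q) :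
    min p (4 * q / (q - 2)) / 2 * ((q - 2) / q) = min (p * (q - 2) / (2 * q)) 2 := by
  have hq2 : 0 < q - 2 := by linarith
  have : 0 < q := by linarith
  rw [div_mul_eq_mul_div, ← mul_div_assoc, div_div, min_mul_of_nonneg _ _ hq2.le,
    ← min_div_div_right (by positivity)]
  congr 1
  · ring
  · field_simp; norm_num

lemma ofReal_mul_div_rpow_mul_rpow {c K n s b : ℝ} (hc : 0 ≤ c) (hK : 0 ≤ K) (hn : 0 < n)
    (hb : 0 ≤ b) (G : ENNReal) :
    (ENNReal.ofReal (c * (K / n) ^ s) * G) ^ b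
      = (ENNReal.ofReal (c * K ^ s) * G) ^ b * ENNReal.ofReal (n ^ (-(s * b))) := by
  have hsplit : c * (K / n) ^ s = c * K ^ s * n ^ (-s) := by
    rw [Real.div_rpow hK hn.le, Real.rpow_neg hn.le, mul_assoc, div_eq_mul_inv]
  rw [hsplit, ENNReal.ofReal_mul (by positivity), mul_right_comm, ENNReal.mul_rpow_of_nonneg _ _ hb,
    ENNReal.ofReal_rpow_of_nonneg (by positivity) hb, ← Real.rpow_mul hn.le, neg_mul]

lemma memLp_min_of_integrable_abs_rpow {Ω : Type*} [MeasurableSpace Ω] {P : Measure Ω}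
    [IsFiniteMeasure P] {Z : Ω → ℝ} (hZ : Measurable Z) {p : ℝ} (hp : 0 < p)
    (hint : Integrable (fun ω ↦ |Z ω| ^ p) P) (a : ℝ) :
    MemLp Z (ENNReal.ofReal (min p a)) P := by
  have hZp : MemLp Z (ENNReal.ofReal p) P := by
    rw [← integrable_norm_rpow_iff hZ.aestronglyMeasurable (by simpa using hp)
      ENNReal.ofReal_ne_top, ENNReal.toReal_ofReal hp.le]
    exact hint
  exact hZp.mono_exponent (ENNReal.ofReal_le_ofReal (min_le_left p a))

lemma exists_lintegral_logJensenGap_sq_mul_le_card_rpow {Θ 𝒳 : Type*} [MeasurableSpace Θ]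
    [MeasurableSpace 𝒳] {ν : Measure Θ} [IsFiniteMeasure ν] {κ : Kernel Θ 𝒳} [IsMarkovKernel κ]
    {f : 𝒳 → ℝ} {g : Θ → ℝ} (hf : Measurable f) (hg : Measurable g) (hg0 : ∀ θ, 0 ≤ g θ)
    (hf0 : ∀ᵐ z ∂(ν ⊗ₘ κ), 0 < f z.2) (hm : ∀ᵐ θ ∂ν, 0 < ∫ x, f x ∂(κ θ)) {p q : ℝ}
    (hp : 2 ≤ p) (hq : 2 < q)
    (hfp : Integrable (fun z : Θ × 𝒳 ↦ |f z.2 / ∫ x, f x ∂(κ z.1)| ^ p) (ν ⊗ₘ κ))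
    (hlog : Integrable (fun z : Θ × 𝒳 ↦
      (1 + |Real.log (f z.2 / ∫ x, f x ∂(κ z.1))| ^ q) * g z.1 ^ q) (ν ⊗ₘ κ)) :
    ∃ C : ℝ, 0 < C ∧ ∀ {ι : Type} [Fintype ι] (A B : Finset ι), A.Nonempty → B.card = A.card →
      ∫⁻ θ, ∫⁻ x : ι → 𝒳,
          ENNReal.ofReal (logJensenGap (𝔼 i ∈ A, f (x i)) (𝔼 i ∈ B, f (x i)) ^ 2 * g θ ^ 2)
          ∂(Measure.pi fun _ ↦ κ θ) ∂ν
        ≤ ENNReal.ofReal (C * A.card ^ (-min (p * (q - 2) / (2 * q)) 2)) := by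
  have hq2 : 0 < q - 2 := by linarith
  set s := min p (4 * q / (q - 2))
  have hs : 2 ≤ s := le_min hp ((le_div_iff₀ hq2).2 (by linarith))
  have hK := momentConst_pos (show 0 < s by linarith)
  have hfs : MemLp (fun z : Θ × 𝒳 ↦ f z.2 / ∫ x, f x ∂(κ z.1)) (ENNReal.ofReal s) (ν ⊗ₘ κ) :=
    memLp_min_of_integrable_abs_rpow (measurable_div_integral_kernel hf) (by linarith) hfp _
  have hdev : Integrable (fun z : Θ × 𝒳 ↦ |f z.2 / ∫ x, f x ∂(κ z.1) - 1| ^ s) (ν ⊗ₘ κ) :=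
    integrable_abs_rpow_of_memLp (zero_le_two.trans hs) le_rfl (hfs.sub (memLp_const 1))
  set D := (ENNReal.ofReal (8 ^ q * (2 + 2 * q ^ q)) * ∫⁻ z : Θ × 𝒳, ENNReal.ofReal
      ((1 + |Real.log (f z.2 / ∫ x, f x ∂(κ z.1))| ^ q) * g z.1 ^ q) ∂(ν ⊗ₘ κ)) ^ (2 / q)
    * (ENNReal.ofReal (2 * momentConst s ^ (s / 2)) * ∫⁻ z : Θ × 𝒳, ENNReal.ofReal
      (|f z.2 / ∫ x, f x ∂(κ z.1) - 1| ^ s) ∂(ν ⊗ₘ κ)) ^ ((q - 2) / q) with hD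
  have hD_top : D ≠ ⊤ := ENNReal.mul_ne_top
    (ENNReal.rpow_ne_top_of_nonneg (by positivity)
      (ENNReal.mul_ne_top ENNReal.ofReal_ne_top hlog.lintegral_lt_top.ne))
    (ENNReal.rpow_ne_top_of_nonneg (by positivity)
      (ENNReal.mul_ne_top ENNReal.ofReal_ne_top hdev.lintegral_lt_top.ne))
  refine ⟨D.toReal + 1, by positivity, fun A B hA hB ↦ ?_⟩
  have hn : (0 : ℝ) < A.card := by simpa using hA
  refine (lintegral_lintegral_logJensenGap_sq_mul_le hf hg hg0 hf0 hm hfs hs hq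
    (min_le_right _ _) hA hB).trans ?_
  rw [ofReal_mul_div_rpow_mul_rpow zero_le_two hK.le hn (by positivity), ← mul_assoc, ← hD,
    min_half_mul_eq_min hq, ENNReal.ofReal_mul (by positivity)]
  gcongr
  exact ENNReal.le_ofReal_iff_toReal_le hD_top (by positivity) |>.2 (by linarith)

lemma log_sub_half_add_log_eq_logJensenGap {ι : Type*} [Fintype ι] (y : ι → ℝ) {p : ι → Prop}
    [DecidablePred p] {m n : ℕ} (hp : (Finset.univ.filter fun i ↦ p i).card = m)
    (hnp : (Finset.univ.filter fun i ↦ ¬ p i).card = m) (hn : n = 2 * m) :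
    Real.log ((∑ i, y i) / n) - (1 / 2) *
        (Real.log ((∑ i ∈ Finset.univ.filter fun i ↦ p i, y i) / m)
          + Real.log ((∑ i ∈ Finset.univ.filter fun i ↦ ¬ p i, y i) / m))
      = logJensenGap (𝔼 i ∈ Finset.univ.filter fun i ↦ p i, y i)
          (𝔼 i ∈ Finset.univ.filter fun i ↦ ¬ p i, y i) := by
  rw [logJensenGap, Finset.expect_eq_sum_div_card, Finset.expect_eq_sum_div_card, hp, hnp,
    ← add_div, Finset.sum_filter_add_sum_filter_not, div_div, hn, Nat.cast_mul, Nat.cast_ofNat,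
    mul_comm (2 : ℝ)]

lemma card_filter_val_lt {n m : ℕ} (h : n = 2 * m) :
    (Finset.univ.filter fun i : Fin n ↦ (i : ℕ) < m).card = m := by
  rw [Fin.card_filter_val_lt]; omega

lemma card_filter_not_val_lt {n m : ℕ} (h : n = 2 * m) :
    (Finset.univ.filter fun i : Fin n ↦ ¬ (i : ℕ) < m).card = m := by
  have hsum := Finset.card_filter_add_card_filter_not (s := Finset.univ) fun i : Fin n ↦ (i : ℕ) < m
  rw [card_filter_val_lt h, Finset.card_univ, Fintype.card_fin] at hsum
  omega

lemma mul_two_pow_pred_rpow_neg_le {M : ℕ} (hM : 1 ≤ M) {r : ℝ} (hr : 0 ≤ r) (ℓ : ℕ) :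
    ((M * 2 ^ (ℓ - 1) : ℕ) : ℝ) ^ (-r) ≤ 2 ^ r * 2 ^ (-r * ℓ) := by
  have hle : (2 : ℝ) ^ ((ℓ : ℝ) - 1) ≤ (M * 2 ^ (ℓ - 1) : ℕ) := by
    calc (2 : ℝ) ^ ((ℓ : ℝ) - 1) ≤ 2 ^ ((ℓ - 1 : ℕ) : ℝ) := by
          gcongr
          · exact one_le_two
          · exact tsub_le_iff_right.2 (by exact_mod_cast le_tsub_add)
      _ = (1 * 2 ^ (ℓ - 1) : ℕ) := by push_cast; rw [Real.rpow_natCast, one_mul]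
      _ ≤ _ := by gcongr
  calc ((M * 2 ^ (ℓ - 1) : ℕ) : ℝ) ^ (-r) ≤ ((2 : ℝ) ^ ((ℓ : ℝ) - 1)) ^ (-r) :=
        Real.rpow_le_rpow_of_nonpos (by positivity) hle (neg_nonpos.2 hr)
    _ = 2 ^ r * 2 ^ (-r * ℓ) := by
        rw [← Real.rpow_mul zero_le_two, ← Real.rpow_add two_pos]
        ring_nf

end Rate

theorem stmt_1_general {Θ 𝒳 : Type*} [MeasurableSpace Θ] [MeasurableSpace 𝒳]
    (ν : Measure Θ) [IsFiniteMeasure ν]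
    (κ : ProbabilityTheory.Kernel Θ 𝒳) [IsMarkovKernel κ]
    (f : 𝒳 → ℝ) (hf_meas : Measurable f)
    (g : Θ → ℝ) (hg_meas : Measurable g) (hg_nonneg : ∀ θ, 0 ≤ g θ)
    (M₀ : ℕ) (hM₀ : 1 ≤ M₀)
    (hf_pos : ∀ᵐ z ∂(ν ⊗ₘ κ), 0 < f z.2)
    (hμ : ∀ᵐ θ ∂ν, 0 < ∫ x, f x ∂(κ θ))
    (p q : ℝ) (hp : 2 ≤ p) (hq : 2 < q)
    (hmom1 : Integrable
      (fun z : Θ × 𝒳 => |f z.2 / ∫ x, f x ∂(κ z.1)| ^ p) (ν ⊗ₘ κ))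
    (hmom2 : Integrable
      (fun z : Θ × 𝒳 =>
        (1 + |Real.log (f z.2 / ∫ x, f x ∂(κ z.1))| ^ q) * g z.1 ^ q)
      (ν ⊗ₘ κ)) :
    ∃ C : ℝ, 0 < C ∧ ∀ ℓ : ℕ, 1 ≤ ℓ →
      ∫⁻ θ, ∫⁻ x : Fin (M₀ * 2 ^ ℓ) → 𝒳,
          ENNReal.ofReal
            ((Real.log ((∑ i, f (x i)) / (M₀ * 2 ^ ℓ : ℕ))
              - (1 / 2) *
                (Real.log
                    ((∑ i ∈ Finset.univ.filter
                        (fun i : Fin (M₀ * 2 ^ ℓ) => (i : ℕ) < M₀ * 2 ^ (ℓ - 1)),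
                      f (x i)) / (M₀ * 2 ^ (ℓ - 1) : ℕ))
                  + Real.log
                    ((∑ i ∈ Finset.univ.filter
                        (fun i : Fin (M₀ * 2 ^ ℓ) => ¬ (i : ℕ) < M₀ * 2 ^ (ℓ - 1)),
                      f (x i)) / (M₀ * 2 ^ (ℓ - 1) : ℕ)))) ^ 2
              * g θ ^ 2)
        ∂(Measure.pi fun _ => κ θ) ∂ν
      ≤ ENNReal.ofReal
          (C * (2 : ℝ) ^ (-(min (p * (q - 2) / (2 * q)) 2) * ℓ)) := by
  obtain ⟨C, hC, hbound⟩ := exists_lintegral_logJensenGap_sq_mul_le_card_rpow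
    hf_meas hg_meas hg_nonneg hf_pos hμ hp hq hmom1 hmom2
  set r := min (p * (q - 2) / (2 * q)) 2
  have hr : 0 ≤ r := le_min (div_nonneg (mul_nonneg (by linarith) (by linarith)) (by linarith))
    zero_le_two
  refine ⟨C * 2 ^ r, by positivity, fun ℓ hℓ ↦ ?_⟩
  have hM : M₀ * 2 ^ ℓ = 2 * (M₀ * 2 ^ (ℓ - 1)) := by
    rw [mul_left_comm, mul_pow_sub_one (by omega)]
  have hA := card_filter_val_lt hM
  have hB := card_filter_not_val_lt hM
  have hA0 : (Finset.univ.filter fun i : Fin (M₀ * 2 ^ ℓ) ↦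
      (i : ℕ) < M₀ * 2 ^ (ℓ - 1)).Nonempty := by
    rw [← Finset.card_pos, hA]; positivity
  simp only [log_sub_half_add_log_eq_logJensenGap _ hA hB hM]
  refine (hbound _ _ hA0 (hB.trans hA.symm)).trans (ENNReal.ofReal_le_ofReal ?_)
  rw [hA, mul_assoc]
  gcongr
  exact mul_two_pow_pred_rpow_neg_le hM₀ hr ℓ

/-- MC convergence rate of the antithetic MLMC correction for the
score-function gradient: if `f > 0` a.s. and the moment conditions
`E[|f(x)/μ(θ)|^p] < ∞` and `E[(1 + |log(f(x)/μ(θ))|^q)·g(θ)^q] < ∞` hold for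
some `p, q > 2` with `(p−2)(q−2) > 4`, where `(θ, x) ∼ ν ⊗ₘ κ` and
`μ(θ) = ∫ f dκ(θ)`, then `E[Δψ_{θ,ℓ}²·g(θ)²] = O(2^{−rℓ})` with
`r = min(p(q−2)/(2q), 2)`.  Here, with `M_ℓ = M₀·2^ℓ` and iid inner samples
`x_1, …, x_{M_ℓ} ∼ κ(θ)` (modeled by the product measure), the antithetic
correction is
`Δψ_{θ,ℓ} = log((1/M_ℓ)Σ_{i<M_ℓ} f(x_i))
  − (1/2)[log((1/M_{ℓ−1})Σ_{i<M_{ℓ−1}} f(x_i))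
        + log((1/M_{ℓ−1})Σ_{M_{ℓ−1}≤i<M_ℓ} f(x_i))]`. -/
theorem stmt_1 {Θ 𝒳 : Type*} [MeasurableSpace Θ] [MeasurableSpace 𝒳]
    (ν : Measure Θ) [IsProbabilityMeasure ν]
    (κ : ProbabilityTheory.Kernel Θ 𝒳) [IsMarkovKernel κ]
    (f : 𝒳 → ℝ) (hf_meas : Measurable f)
    (g : Θ → ℝ) (hg_meas : Measurable g) (hg_nonneg : ∀ θ, 0 ≤ g θ)
    (M₀ : ℕ) (hM₀ : 1 ≤ M₀)
    (hf_pos : ∀ᵐ z ∂(ν ⊗ₘ κ), 0 < f z.2)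
    (hμ : ∀ᵐ θ ∂ν, Integrable f (κ θ) ∧ 0 < ∫ x, f x ∂(κ θ))
    (p q : ℝ) (hp : 2 < p) (hq : 2 < q) (hpq : 4 < (p - 2) * (q - 2))
    (hmom1 : Integrable
      (fun z : Θ × 𝒳 => |f z.2 / ∫ x, f x ∂(κ z.1)| ^ p) (ν ⊗ₘ κ))
    (hmom2 : Integrable
      (fun z : Θ × 𝒳 =>
        (1 + |Real.log (f z.2 / ∫ x, f x ∂(κ z.1))| ^ q) * g z.1 ^ q)
      (ν ⊗ₘ κ)) :
    ∃ C : ℝ, 0 < C ∧ ∀ ℓ : ℕ, 1 ≤ ℓ →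
      ∫⁻ θ, ∫⁻ x : Fin (M₀ * 2 ^ ℓ) → 𝒳,
          ENNReal.ofReal
            ((Real.log ((∑ i, f (x i)) / (M₀ * 2 ^ ℓ : ℕ))
              - (1 / 2) *
                (Real.log
                    ((∑ i ∈ Finset.univ.filter
                        (fun i : Fin (M₀ * 2 ^ ℓ) => (i : ℕ) < M₀ * 2 ^ (ℓ - 1)),
                      f (x i)) / (M₀ * 2 ^ (ℓ - 1) : ℕ))
                  + Real.log
                    ((∑ i ∈ Finset.univ.filter
                        (fun i : Fin (M₀ * 2 ^ ℓ) => ¬ (i : ℕ) < M₀ * 2 ^ (ℓ - 1)),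
                      f (x i)) / (M₀ * 2 ^ (ℓ - 1) : ℕ)))) ^ 2
              * g θ ^ 2)
        ∂(Measure.pi fun _ => κ θ) ∂ν
      ≤ ENNReal.ofReal
          (C * (2 : ℝ) ^ (-(min (p * (q - 2) / (2 * q)) 2) * ℓ)) :=
  stmt_1_general ν κ f hf_meas g hg_meas hg_nonneg M₀ hM₀ hf_pos (hμ.mono fun _ h ↦ h.2) p q
    hp.le hq hmom1 hmom2
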